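/- Let π be a probability measure on a measurable space Y, r : Y → ℝ a bounded measurable function, and ρ > 0. Then the infimum, over all probability measures Q on Y that are absolutely continuous with respect to π and satisfy KL(Q‖π) ≤ ρ, of ∫ r dQ equals ⨆_{λ > 0} ( −λ·log(∫ exp(−r(y)/λ) dπ(y)) − λ·ρ ). -/

import Mathlib

open MeasureTheory ProbabilityTheory

/-- The Kullback–Leibler divergence `KL(Q‖P) = ∫ log (dQ/dP) dQ` (a real number, defined
for `Q` absolutely continuous with respect to `P`). -/
noncomputable def klDivReal {Y : Type*} [MeasurableSpace Y] (Q P : Measure Y) : ℝ :=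
  ∫ y, llr Q P y ∂Q

/-!
Gibbs' inequality for the exponentially tilted measure `π.tilted f` gives the Donsker–Varadhan bound
`∫ f dQ ≤ KL(Q‖π) + log ∫ exp f dπ`; with `f = -r/λ` this is weak duality. Here `r` is
`Q`-integrable because `|f| ≤ llr Q π + exp |f| · dπ/dQ` for every `f`, in particular for a small
multiple of `r`. Conversely, the tilted measure `Q_b ∝ exp(-b r) π` attains equality at `λ = 1/b`,
up to the slack `(ρ - KL(Q_b‖π)) / b`. Since `b ↦ KL(Q_b‖π)` is continuous and vanishes at `0`, one
may choose `b` so that `Q_b` lies in the ball and the slack is arbitrarily small: either the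
constraint becomes tight at some `b`, or `b` can be taken large.
-/

section Divergence

variable {Y : Type*} [MeasurableSpace Y] {Q P : Measure Y} {f : Y → ℝ}

lemma klDivReal_nonneg [IsProbabilityMeasure Q] [IsProbabilityMeasure P] (hQP : Q ≪ P) :
    0 ≤ klDivReal Q P := by
  rw [klDivReal, ← InformationTheory.toReal_klDiv_of_measure_eq hQP (by simp)]
  exact ENNReal.toReal_nonneg

lemma integral_le_klDivReal_add_log_integral_exp [IsProbabilityMeasure Q] [SigmaFinite P]
    (hQP : Q ≪ P) (h_llr : Integrable (llr Q P) Q) (hfQ : Integrable f Q)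
    (hfP : Integrable (fun y ↦ Real.exp (f y)) P) :
    ∫ y, f y ∂Q ≤ klDivReal Q P + Real.log (∫ y, Real.exp (f y) ∂P) := by
  have : NeZero P := ⟨fun h ↦
    IsProbabilityMeasure.ne_zero Q (Measure.absolutelyContinuous_zero_iff.1 (h ▸ hQP))⟩
  have : IsProbabilityMeasure (P.tilted f) := isProbabilityMeasure_tilted hfP
  have gibbs : 0 ≤ klDivReal Q (P.tilted f) :=
    klDivReal_nonneg (hQP.trans (absolutelyContinuous_tilted hfP))
  rw [klDivReal, integral_llr_tilted_right hQP hfQ hfP h_llr] at gibbs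
  rw [klDivReal]
  linarith

lemma integrable_toReal_rnDeriv_mul [SigmaFinite P] (hfP : Integrable f P) :
    Integrable (fun y ↦ (P.rnDeriv Q y).toReal * f y) Q :=
  (integrable_withDensity_iff_integrable_smul' (P.measurable_rnDeriv Q)
    (P.rnDeriv_lt_top Q)).1 (hfP.mono_measure (Measure.withDensity_rnDeriv_le P Q))

lemma integrable_of_integrable_llr_of_integrable_exp_abs [SigmaFinite Q] [SigmaFinite P]
    (hQP : Q ≪ P) (h_llr : Integrable (llr Q P) Q) (hf : AEStronglyMeasurable f P)
    (hfP : Integrable (fun y ↦ Real.exp |f y|) P) : Integrable f Q := by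
  refine ((integrable_toReal_rnDeriv_mul hfP).add h_llr).mono' (hf.mono_ac hQP) ?_
  filter_upwards [exp_neg_llr hQP] with y hy
  calc ‖f y‖ = (-llr Q P y + |f y|) + llr Q P y := by rw [Real.norm_eq_abs]; ring
    _ ≤ Real.exp (-llr Q P y + |f y|) + llr Q P y := by
        gcongr
        linarith [Real.add_one_le_exp (-llr Q P y + |f y|)]
    _ = (P.rnDeriv Q y).toReal * Real.exp |f y| + llr Q P y := by rw [Real.exp_add, hy]

lemma integrable_of_integrable_llr_of_zero_mem_interior_integrableExpSet
    [SigmaFinite Q] [SigmaFinite P] (hQP : Q ≪ P) (h_llr : Integrable (llr Q P) Q)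
    (hf : 0 ∈ interior (integrableExpSet f P)) : Integrable f Q := by
  obtain ⟨ε, hε, hball⟩ := Metric.mem_nhds_iff.1 (mem_interior_iff_mem_nhds.1 hf)
  have hpos : Integrable (fun y ↦ Real.exp (ε / 2 * f y)) P :=
    hball (by simp [abs_of_pos hε, hε])
  have hneg : Integrable (fun y ↦ Real.exp (-(ε / 2) * f y)) P :=
    hball (by simp [abs_of_pos hε, hε])
  have hscaled : Integrable (fun y ↦ ε / 2 * f y) Q := by
    refine integrable_of_integrable_llr_of_integrable_exp_abs hQP h_llr
      ((aemeasurable_of_mem_interior_integrableExpSet hf).const_mul _).aestronglyMeasurable ?_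
    simpa only [abs_mul] using integrable_exp_abs_mul_abs hpos hneg
  exact (integrable_const_mul_iff (half_pos hε).ne'.isUnit f).1 hscaled

end Divergence

section Tilted

variable {Y : Type*} [MeasurableSpace Y] {P : Measure Y} {f : Y → ℝ} {t : ℝ}

lemma llr_tilted_self_ae_eq [SigmaFinite P] (hP : Integrable (fun y ↦ Real.exp (f y)) P) :
    llr (P.tilted f) P =ᵐ[P.tilted f] fun y ↦ f y - Real.log (∫ z, Real.exp (f z) ∂P) :=
  (tilted_absolutelyContinuous P f).ae_le (log_rnDeriv_tilted_left_self hP)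

lemma integrable_llr_tilted_self [SigmaFinite P] (hP : Integrable (fun y ↦ Real.exp (f y)) P)
    (hf : Integrable f (P.tilted f)) : Integrable (llr (P.tilted f) P) (P.tilted f) :=
  (hf.sub (integrable_const _)).congr (llr_tilted_self_ae_eq hP).symm

lemma klDivReal_tilted_self [SigmaFinite P] [NeZero P]
    (hP : Integrable (fun y ↦ Real.exp (f y)) P) (hf : Integrable f (P.tilted f)) :
    klDivReal (P.tilted f) P =
      ∫ y, f y ∂(P.tilted f) - Real.log (∫ y, Real.exp (f y) ∂P) := by
  have : IsProbabilityMeasure (P.tilted f) := isProbabilityMeasure_tilted hP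
  rw [klDivReal, integral_congr_ae (llr_tilted_self_ae_eq hP), integral_sub hf (integrable_const _),
    integral_const, probReal_univ, one_smul]

lemma integrable_mul_tilted_mul (ht : t ∈ interior (integrableExpSet f P)) :
    Integrable (fun y ↦ t * f y) (P.tilted (t * f ·)) :=
  ((memLp_tilted_mul ht 1).integrable le_rfl).const_mul t

lemma klDivReal_tilted_mul [SigmaFinite P] [NeZero P]
    (ht : t ∈ interior (integrableExpSet f P)) :
    klDivReal (P.tilted (t * f ·)) P = t * deriv (cgf f P) t - cgf f P t := by
  rw [klDivReal_tilted_self (integrable_of_mem_integrableExpSet (interior_subset ht))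
      (integrable_mul_tilted_mul ht),
    integral_const_mul, integral_tilted_mul_self ht, cgf, mgf]

lemma continuousOn_klDivReal_tilted_mul [SigmaFinite P] [NeZero P] :
    ContinuousOn (fun t ↦ klDivReal (P.tilted (t * f ·)) P)
      (interior (integrableExpSet f P)) :=
  ((continuousOn_id.mul analyticOnNhd_cgf.deriv.continuousOn).sub
    analyticOnNhd_cgf.continuousOn).congr fun _ ht ↦ klDivReal_tilted_mul ht

lemma integrableExpSet_eq_univ_of_ae_abs_le [IsFiniteMeasure P] {C : ℝ} (hf : AEMeasurable f P)
    (hC : ∀ᵐ y ∂P, |f y| ≤ C) : integrableExpSet f P = Set.univ :=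
  Set.eq_univ_of_forall fun _ ↦
    integrable_exp_mul_of_mem_Icc hf (hC.mono fun _ h ↦ abs_le.1 h)

end Tilted

lemma exists_pos_le_and_sub_le_mul {κ : ℝ → ℝ} {ρ ε : ℝ} (hκ : ContinuousOn κ (Set.Ici 0))
    (hκ_nonneg : ∀ b, 0 ≤ b → 0 ≤ κ b) (hκ_zero : κ 0 < ρ) (hε : 0 < ε) :
    ∃ b, 0 < b ∧ κ b ≤ ρ ∧ ρ - κ b ≤ ε * b := by
  have hρ : 0 < ρ := (hκ_nonneg 0 le_rfl).trans_lt hκ_zero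
  have hb : 0 < ρ / ε := div_pos hρ hε
  rcases le_total (κ (ρ / ε)) ρ with hle | hge
  · refine ⟨ρ / ε, hb, hle, ?_⟩
    rw [mul_div_cancel₀ ρ hε.ne']
    exact sub_le_self ρ (hκ_nonneg _ hb.le)
  · obtain ⟨b, hb_mem, rfl⟩ :=
      intermediate_value_Icc hb.le (hκ.mono Set.Icc_subset_Ici_self) ⟨hκ_zero.le, hge⟩
    have hb_pos : 0 < b := hb_mem.1.lt_of_ne' (by rintro rfl; exact hκ_zero.false)
    exact ⟨b, hb_pos, le_rfl, by rw [sub_self]; positivity⟩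

section Duality

variable {Y : Type*} [MeasurableSpace Y] {π : Measure Y} {r : Y → ℝ} {ρ lam : ℝ}

/-- The expected rewards `∫ r dQ` attainable by probability measures `Q` in the KL ball of radius
`ρ` around `π`, whose infimum is the worst-case reward. Integrability of `llr Q π` is imposed
because `klDivReal Q π` takes the junk value `0` when the divergence is infinite. -/
def klBallRewards (π : Measure Y) (r : Y → ℝ) (ρ : ℝ) : Set ℝ :=
  {v : ℝ | ∃ Q : Measure Y, IsProbabilityMeasure Q ∧ Q ≪ π ∧
    Integrable (llr Q π) Q ∧ klDivReal Q π ≤ ρ ∧ v = ∫ y, r y ∂Q}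

/-- The objective of the dual entropic-risk program at the multiplier `lam`, meant for
`0 < lam`. -/
noncomputable def entropicRiskDual (π : Measure Y) (r : Y → ℝ) (ρ lam : ℝ) : ℝ :=
  -lam * Real.log (∫ y, Real.exp (-r y / lam) ∂π) - lam * ρ

lemma entropicRiskDual_eq_cgf (π : Measure Y) (r : Y → ℝ) (ρ lam : ℝ) :
    entropicRiskDual π r ρ lam = -lam * cgf r π (-lam⁻¹) - lam * ρ := by
  simp only [entropicRiskDual, cgf, mgf, div_eq_inv_mul, mul_neg, neg_mul]

lemma entropicRiskDual_le_of_mem_klBallRewards [SigmaFinite π] {v : ℝ}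
    (hv : v ∈ klBallRewards π r ρ) (hr : 0 ∈ interior (integrableExpSet r π))
    (hlam : 0 < lam) (hexp : -lam⁻¹ ∈ integrableExpSet r π) :
    entropicRiskDual π r ρ lam ≤ v := by
  obtain ⟨Q, _, hQπ, h_llr, h_kl, rfl⟩ := hv
  have hrQ : Integrable r Q :=
    integrable_of_integrable_llr_of_zero_mem_interior_integrableExpSet hQπ h_llr hr
  have donsker_varadhan : -lam⁻¹ * ∫ y, r y ∂Q ≤ klDivReal Q π + cgf r π (-lam⁻¹) := by
    rw [← integral_const_mul]
    exact integral_le_klDivReal_add_log_integral_exp hQπ h_llr (hrQ.const_mul _) hexp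
  calc entropicRiskDual π r ρ lam
      = -(lam * (ρ + cgf r π (-lam⁻¹))) := by rw [entropicRiskDual_eq_cgf]; ring
    _ ≤ -(lam * (-lam⁻¹ * ∫ y, r y ∂Q)) := by gcongr; linarith
    _ = ∫ y, r y ∂Q := by field_simp

lemma integral_tilted_mem_klBallRewards [SigmaFinite π] [NeZero π] {t : ℝ}
    (ht : t ∈ interior (integrableExpSet r π)) (h_kl : klDivReal (π.tilted (t * r ·)) π ≤ ρ) :
    ∫ y, r y ∂(π.tilted (t * r ·)) ∈ klBallRewards π r ρ :=
  have hexp := integrable_of_mem_integrableExpSet (interior_subset ht)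
  ⟨_, isProbabilityMeasure_tilted hexp, tilted_absolutelyContinuous _ _,
    integrable_llr_tilted_self hexp (integrable_mul_tilted_mul ht), h_kl, rfl⟩

lemma integral_tilted_eq_entropicRiskDual_add [SigmaFinite π] [NeZero π] (hlam : lam ≠ 0)
    (ht : -lam⁻¹ ∈ interior (integrableExpSet r π)) :
    ∫ y, r y ∂(π.tilted (-lam⁻¹ * r ·)) =
      entropicRiskDual π r ρ lam + lam * (ρ - klDivReal (π.tilted (-lam⁻¹ * r ·)) π) := by
  rw [integral_tilted_mul_self ht, entropicRiskDual_eq_cgf, klDivReal_tilted_mul ht]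
  field_simp
  ring

lemma exists_mem_klBallRewards_le_entropicRiskDual_add [IsProbabilityMeasure π]
    (hr : Set.Iic 0 ⊆ interior (integrableExpSet r π)) (hρ : 0 < ρ) {ε : ℝ} (hε : 0 < ε) :
    ∃ v ∈ klBallRewards π r ρ, ∃ lam, 0 < lam ∧ v ≤ entropicRiskDual π r ρ lam + ε := by
  have hmem (b : ℝ) (hb : 0 ≤ b) : -b ∈ interior (integrableExpSet r π) := hr (neg_nonpos.2 hb)
  have hκ_nonneg (b : ℝ) (hb : 0 ≤ b) : 0 ≤ klDivReal (π.tilted (-b * r ·)) π :=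
    have hexp := integrable_of_mem_integrableExpSet (interior_subset (hmem b hb))
    have := isProbabilityMeasure_tilted hexp
    klDivReal_nonneg (tilted_absolutelyContinuous _ _)
  have hκ_zero : klDivReal (π.tilted (-0 * r ·)) π < ρ := by
    rw [klDivReal_tilted_mul (hmem 0 le_rfl)]
    simpa using hρ
  obtain ⟨b, hb, hbρ, hslack⟩ := exists_pos_le_and_sub_le_mul
    (continuousOn_klDivReal_tilted_mul.comp continuousOn_neg hmem) hκ_nonneg hκ_zero hε
  have hvalue := integral_tilted_eq_entropicRiskDual_add (ρ := ρ) (inv_ne_zero hb.ne')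
    (by rw [inv_inv]; exact hmem b hb.le)
  rw [inv_inv] at hvalue
  refine ⟨_, integral_tilted_mem_klBallRewards (hmem b hb.le) hbρ, b⁻¹, inv_pos.2 hb, ?_⟩
  rw [hvalue, add_le_add_iff_left, inv_mul_le_iff₀ hb, mul_comm b]
  exact hslack

end Duality

theorem kl_ball_worst_case_reward_duality_general
    {Y : Type*} [MeasurableSpace Y]
    (π : Measure Y) [IsProbabilityMeasure π]
    (r : Y → ℝ) (hr : Set.Iic 0 ⊆ interior (integrableExpSet r π))
    (ρ : ℝ) (hρ : 0 < ρ) :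
    sInf (klBallRewards π r ρ) = ⨆ lam : {l : ℝ // 0 < l}, entropicRiskDual π r ρ lam := by
  have weak_duality : ∀ v ∈ klBallRewards π r ρ, ∀ lam : {l : ℝ // 0 < l},
      entropicRiskDual π r ρ lam ≤ v :=
    fun v hv lam ↦ entropicRiskDual_le_of_mem_klBallRewards hv (hr Set.self_mem_Iic) lam.2
      (interior_subset (hr (neg_nonpos.2 (inv_nonneg.2 lam.2.le))))
  obtain ⟨v₀, hv₀, -⟩ := exists_mem_klBallRewards_le_entropicRiskDual_add hr hρ one_pos
  have : Nonempty {l : ℝ // 0 < l} := ⟨⟨1, one_pos⟩⟩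
  have hdual_bdd : BddAbove (Set.range fun lam : {l : ℝ // 0 < l} ↦ entropicRiskDual π r ρ lam) :=
    ⟨v₀, Set.forall_mem_range.2 (weak_duality v₀ hv₀)⟩
  have hprimal_bdd : BddBelow (klBallRewards π r ρ) :=
    ⟨_, fun v hv ↦ weak_duality v hv ⟨1, one_pos⟩⟩
  apply le_antisymm
  · refine le_of_forall_pos_le_add fun ε hε ↦ ?_
    obtain ⟨v, hv, lam, hlam, hle⟩ := exists_mem_klBallRewards_le_entropicRiskDual_add hr hρ hε
    calc sInf (klBallRewards π r ρ) ≤ v := csInf_le hprimal_bdd hv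
      _ ≤ entropicRiskDual π r ρ lam + ε := hle
      _ ≤ (⨆ lam : {l : ℝ // 0 < l}, entropicRiskDual π r ρ lam) + ε := by
          gcongr
          exact le_ciSup hdual_bdd ⟨lam, hlam⟩
  · exact ciSup_le fun lam ↦ le_csInf ⟨v₀, hv₀⟩ fun v hv ↦ weak_duality v hv lam

/-- **KL specialization of Lemma 1 for a single prompt (equation (4)).**
The worst-case expected reward over the KL ball of radius `ρ` around `π` equals the dual
entropic-risk program `⨆_{λ>0} (−λ·log ∫ exp(−r/λ) dπ − λρ)`. -/
theorem kl_ball_worst_case_reward_duality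
    {Y : Type*} [MeasurableSpace Y]
    (π : Measure Y) [IsProbabilityMeasure π]
    (r : Y → ℝ) (hr_meas : Measurable r) (hr_bdd : ∃ C : ℝ, ∀ y, |r y| ≤ C)
    (ρ : ℝ) (hρ : 0 < ρ) :
    sInf {v : ℝ | ∃ Q : Measure Y, IsProbabilityMeasure Q ∧ Q ≪ π ∧
        Integrable (llr Q π) Q ∧ klDivReal Q π ≤ ρ ∧ v = ∫ y, r y ∂Q} =
    ⨆ lam : {l : ℝ // 0 < l},
      (-(lam : ℝ) * Real.log (∫ y, Real.exp (-r y / lam) ∂π) - lam * ρ) := by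
  obtain ⟨C, hC⟩ := hr_bdd
  have hexp := integrableExpSet_eq_univ_of_ae_abs_le hr_meas.aemeasurable (ae_of_all π hC)
  exact kl_ball_worst_case_reward_duality_general π r (by simp [hexp]) ρ hρ
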